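/- Let q be a (1/e)-approximately log-concave probability density on ℝⁿ with mean μ(q) and positive definite covariance Cov(q). Then the ellipsoid 𝓔_q(1/100) = {x : ‖x − μ(q)‖_{Cov(q)^{-1}} ≤ 1/100} is contained in the support of q. -/

import Mathlib

open MeasureTheory ProbabilityTheory Real

noncomputable section

/-- A nonnegative function `g` is log-concave if it satisfies the pointwise
multiplicative concavity inequality (equivalently, `g = exp` of a concave
function, with the value `0 = exp (-∞)` allowed). -/
def IsLogConcave {E : Type*} [AddCommMonoid E] [SMul ℝ E] (g : E → ℝ) : Prop :=
  (∀ x, 0 ≤ g x) ∧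
    ∀ x y : E, ∀ a b : ℝ, 0 ≤ a → 0 ≤ b → a + b = 1 →
      g x ^ a * g y ^ b ≤ g (a • x + b • y)

/-- A density `p` is `ε`-approximately log-concave if there is a log-concave
function `g` with `ε • g ≤ p ≤ (1/ε) • g` pointwise. -/
def ApproxLogConcave {E : Type*} [AddCommMonoid E] [SMul ℝ E] (ε : ℝ) (p : E → ℝ) : Prop :=
  ∃ g : E → ℝ, IsLogConcave g ∧ ∀ x, ε * g x ≤ p x ∧ p x ≤ (1 / ε) * g x

/-- Mean (barycenter) of the probability density `p` on `ℝⁿ`. -/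
def densMean (n : ℕ) (p : EuclideanSpace ℝ (Fin n) → ℝ) : EuclideanSpace ℝ (Fin n) :=
  ∫ x, p x • x

/-- Covariance matrix of the probability density `p` on `ℝⁿ`. -/
def densCov (n : ℕ) (p : EuclideanSpace ℝ (Fin n) → ℝ) : Matrix (Fin n) (Fin n) ℝ :=
  Matrix.of fun i j => ∫ x, p x * ((x i - densMean n p i) * (x j - densMean n p j))

/-- The (Mahalanobis-type) norm `‖x‖_A = √(xᵀ A x)` associated with a matrix `A`. -/
def mahal (n : ℕ) (A : Matrix (Fin n) (Fin n) ℝ) (x : EuclideanSpace ℝ (Fin n)) : ℝ :=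
  Real.sqrt (∑ i, ∑ j, x i * A i j * x j)

/-- Density of the Gaussian measure `N(μ, S)` on `ℝⁿ`. -/
def gaussPdf (n : ℕ) (μ : EuclideanSpace ℝ (Fin n)) (S : Matrix (Fin n) (Fin n) ℝ)
    (x : EuclideanSpace ℝ (Fin n)) : ℝ :=
  (2 * π) ^ (-(n : ℝ) / 2) * S.det ^ (-(1 : ℝ) / 2) *
    Real.exp (-(1 / 2) * ∑ i, ∑ j, (x i - μ i) * S⁻¹ i j * (x j - μ j))

open scoped ENNReal NNReal

/-- One-dimensional Brunn–Minkowski inequality for compact sets, in midpoint form. -/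
lemma volume_add_le_two_mul_of_isCompact {K L C : Set ℝ} (hK : IsCompact K) (hL : IsCompact L)
    (hK0 : K.Nonempty) (hL0 : L.Nonempty)
    (hC : ∀ x ∈ K, ∀ y ∈ L, 2⁻¹ * (x + y) ∈ C) :
    volume K + volume L ≤ 2 * volume C := by
  obtain ⟨k, hk, hkmax⟩ := hK.exists_isGreatest hK0
  obtain ⟨l, hl, hlmin⟩ := hL.exists_isLeast hL0
  have hsub : (fun z => z - l) ⁻¹' K ∪ (fun z => z - k) ⁻¹' L ⊆ (fun z => 2⁻¹ * z) ⁻¹' C := by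
    rintro z (hz | hz)
    · have := hC _ hz _ hl
      simpa using this
    · have := hC _ hk _ hz
      simpa using this
  have hdisj : AEDisjoint volume ((fun z => z - l) ⁻¹' K) ((fun z => z - k) ⁻¹' L) := by
    refine measure_mono_null (t := {k + l}) ?_ (by simp)
    rintro z ⟨hz, hz'⟩
    have h1 : z - l ≤ k := hkmax hz
    have h2 : l ≤ z - k := hlmin hz'
    exact Set.mem_singleton_iff.2 (by linarith)
  have hmeas : MeasurableSet ((fun z => z - k) ⁻¹' L) :=
    (measurable_id.sub_const k) hL.measurableSet
  calc volume K + volume L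
      = volume ((fun z => z - l) ⁻¹' K ∪ (fun z => z - k) ⁻¹' L) := by
        rw [measure_union₀ hmeas.nullMeasurableSet hdisj]
        simp only [sub_eq_add_neg, measure_preimage_add_right]
    _ ≤ volume ((fun z => 2⁻¹ * z) ⁻¹' C) := measure_mono hsub
    _ = 2 * volume C := by
        rw [Real.volume_preimage_mul_left (by norm_num)]
        norm_num

/-- One-dimensional Brunn–Minkowski inequality, in midpoint form. -/
lemma volume_add_le_two_mul {A B C : Set ℝ} (hA : MeasurableSet A) (hB : MeasurableSet B)
    (hA0 : A.Nonempty) (hB0 : B.Nonempty)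
    (hC : ∀ x ∈ A, ∀ y ∈ B, 2⁻¹ * (x + y) ∈ C) :
    volume A + volume B ≤ 2 * volume C := by
  obtain ⟨a, ha⟩ := hA0
  obtain ⟨b, hb⟩ := hB0
  rw [hA.measure_eq_iSup_isCompact, hB.measure_eq_iSup_isCompact]
  simp only [iSup_and']
  refine ENNReal.biSup_add_biSup_le' (p := fun K => K ⊆ A ∧ IsCompact K)
    (q := fun L => L ⊆ B ∧ IsCompact L) ⟨∅, by simp⟩ ⟨∅, by simp⟩ ?_
  rintro K ⟨hKA, hK⟩ L ⟨hLB, hL⟩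
  calc volume K + volume L ≤ volume (insert a K) + volume (insert b L) := by
        gcongr <;> exact Set.subset_insert _ _
    _ ≤ 2 * volume C := volume_add_le_two_mul_of_isCompact (hK.insert a) (hL.insert b)
        (Set.insert_nonempty _ _) (Set.insert_nonempty _ _)
        fun x hx y hy => hC x (Set.insert_subset ha hKA hx) y (Set.insert_subset hb hLB hy)

/-- Comparing superlevel sets compares integrals. -/
lemma lintegral_add_le_two_mul_of_superlevel {f g h : ℝ → ℝ≥0∞} (hf : Measurable f)
    (hg : Measurable g) (hh : Measurable h) (hf' : ∀ x, f x ≠ ∞) (hg' : ∀ x, g x ≠ ∞)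
    (hh' : ∀ x, h x ≠ ∞)
    (hlev : ∀ t : ℝ≥0∞, volume {x | t < f x} + volume {x | t < g x} ≤ 2 * volume {x | t < h x}) :
    (∫⁻ x, f x) + ∫⁻ x, g x ≤ 2 * ∫⁻ x, h x := by
  have key : ∀ u : ℝ → ℝ≥0∞, Measurable u → (∀ x, u x ≠ ∞) →
      ∫⁻ x, u x = ∫⁻ t in Set.Ioi (0 : ℝ), volume {x | ENNReal.ofReal t < u x} := by
    intro u hu hu'
    have := lintegral_eq_lintegral_meas_lt (f := fun x => (u x).toReal) volume
      (.of_forall fun _ => ENNReal.toReal_nonneg) hu.ennreal_toReal.aemeasurable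
    simp only [ENNReal.ofReal_toReal (hu' _)] at this
    rw [this]
    refine setLIntegral_congr_fun measurableSet_Ioi fun t ht => ?_
    simp only [ENNReal.ofReal_lt_iff_lt_toReal (le_of_lt ht) (hu' _)]
  have hmeas : ∀ u : ℝ → ℝ≥0∞, Measurable fun t : ℝ => volume {x | ENNReal.ofReal t < u x} :=
    fun u => Antitone.measurable fun s t hst =>
      measure_mono fun x hx => (ENNReal.ofReal_le_ofReal hst).trans_lt hx
  rw [key f hf hf', key g hg hg', key h hh hh', ← lintegral_add_left (hmeas f),
    ← lintegral_const_mul _ (hmeas h)]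
  exact lintegral_mono fun t => hlev _

/-- The midpoint Prékopa–Leindler property of a measure `μ`. -/
def MidpointPrekopaLeindler {E : Type*} [Add E] [SMul ℝ E] [MeasurableSpace E]
    (μ : Measure E) : Prop :=
  ∀ f g h : E → ℝ≥0∞, Measurable f → Measurable g → Measurable h →
    (∀ x y, f x * g y ≤ h ((2⁻¹ : ℝ) • (x + y)) ^ 2) →
    (∫⁻ x, f x ∂μ) * ∫⁻ x, g x ∂μ ≤ (∫⁻ x, h x ∂μ) ^ 2

lemma ENNReal.four_mul_mul_le_sq_add (x y : ℝ≥0∞) : 4 * x * y ≤ (x + y) ^ 2 := by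
  induction x with
  | top => simp
  | coe x =>
    induction y with
    | top => simp
    | coe y => exact_mod_cast four_mul_le_pow_two_add x y

/-- The Prékopa–Leindler inequality on the line for bounded functions. -/
lemma prekopaLeindler_real_of_iSup_ne_top {f g h : ℝ → ℝ≥0∞} (hf : Measurable f)
    (hg : Measurable g) (hh : Measurable h) (hf' : ⨆ x, f x ≠ ∞) (hg' : ⨆ x, g x ≠ ∞)
    (hfgh : ∀ x y, f x * g y ≤ h ((2⁻¹ : ℝ) • (x + y)) ^ 2) :
    (∫⁻ x, f x) * ∫⁻ x, g x ≤ (∫⁻ x, h x) ^ 2 := by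
  set a := ⨆ x, f x
  set b := ⨆ x, g x
  rcases eq_or_ne a 0 with ha0 | ha0
  · have : ∀ x, f x = 0 := fun x => le_antisymm (ha0 ▸ le_iSup f x) zero_le
    simp [this]
  rcases eq_or_ne b 0 with hb0 | hb0
  · have : ∀ x, g x = 0 := fun x => le_antisymm (hb0 ▸ le_iSup g x) zero_le
    simp [this]
  have habt : a * b ≠ ∞ := ENNReal.mul_ne_top hf' hg'
  obtain ⟨c, hc⟩ : ∃ c : ℝ≥0∞, c ^ 2 = a * b :=
    ⟨(a * b) ^ (2⁻¹ : ℝ), by rw [← ENNReal.rpow_natCast, ← ENNReal.rpow_mul]; norm_num⟩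
  have hsupf : ⨆ x, b * f x = a * b := by rw [← ENNReal.mul_iSup, mul_comm]
  have hsupg : ⨆ x, a * g x = a * b := by rw [← ENNReal.mul_iSup]
  have hfle : ∀ x, b * f x ≤ a * b := fun x => hsupf ▸ le_iSup (fun x => b * f x) x
  have hgle : ∀ x, a * g x ≤ a * b := fun x => hsupg ▸ le_iSup (fun x => a * g x) x
  have hlin : (∫⁻ x, b * f x) + ∫⁻ x, a * g x ≤ 2 * ∫⁻ x, min (c * h x) (a * b) := by
    refine lintegral_add_le_two_mul_of_superlevel (hf.const_mul b) (hg.const_mul a)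
      ((hh.const_mul c).min measurable_const) (fun x => ((hfle x).trans_lt habt.lt_top).ne)
      (fun x => ((hgle x).trans_lt habt.lt_top).ne)
      (fun x => ((min_le_right _ _).trans_lt habt.lt_top).ne) fun t => ?_
    rcases lt_or_ge t (a * b) with ht | ht
    · refine volume_add_le_two_mul (measurableSet_lt measurable_const (hf.const_mul b))
        (measurableSet_lt measurable_const (hg.const_mul a))
        (lt_iSup_iff.1 (ht.trans_eq hsupf.symm)) (lt_iSup_iff.1 (ht.trans_eq hsupg.symm)) ?_
      intro x hx y hy
      refine lt_min ?_ ht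
      have h1 : t ^ 2 < (c * h (2⁻¹ * (x + y))) ^ 2 :=
        calc t ^ 2 = t * t := sq t
          _ < (b * f x) * (a * g y) := ENNReal.mul_lt_mul hx hy
          _ = a * b * (f x * g y) := by ring
          _ ≤ a * b * h (2⁻¹ * (x + y)) ^ 2 := by gcongr; exact hfgh x y
          _ = (c * h (2⁻¹ * (x + y))) ^ 2 := by rw [mul_pow, hc]
      exact (ENNReal.pow_lt_pow_left_iff two_ne_zero).1 h1
    · have h1 : {x | t < b * f x} = ∅ :=
        Set.eq_empty_of_forall_notMem fun x hx => absurd hx ((hfle x).trans ht).not_gt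
      have h2 : {x | t < a * g x} = ∅ :=
        Set.eq_empty_of_forall_notMem fun x hx => absurd hx ((hgle x).trans ht).not_gt
      simp [h1, h2]
  have hlin' : b * (∫⁻ x, f x) + a * ∫⁻ x, g x ≤ 2 * (c * ∫⁻ x, h x) := by
    rw [← lintegral_const_mul _ hf, ← lintegral_const_mul _ hg, ← lintegral_const_mul _ hh]
    refine hlin.trans ?_
    gcongr
    exact min_le_left _ _
  set F := ∫⁻ x, f x
  set G := ∫⁻ x, g x
  set H := ∫⁻ x, h x
  have h4 : (4 * (a * b)) * (F * G) ≤ (4 * (a * b)) * H ^ 2 :=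
    calc (4 * (a * b)) * (F * G) = 4 * (b * F) * (a * G) := by ring
      _ ≤ (b * F + a * G) ^ 2 := ENNReal.four_mul_mul_le_sq_add _ _
      _ ≤ (2 * (c * H)) ^ 2 := by gcongr
      _ = (4 * (a * b)) * H ^ 2 := by rw [mul_pow, mul_pow, hc]; ring
  exact (ENNReal.mul_le_mul_iff_right (by simp [ha0, hb0])
    (ENNReal.mul_ne_top (by simp) habt)).1 h4

lemma midpointPrekopaLeindler_real : MidpointPrekopaLeindler (volume : Measure ℝ) := by
  intro f g h hf hg hh hfgh
  have trunc : ∀ u : ℝ → ℝ≥0∞, Measurable u →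
      ∫⁻ x, u x = ⨆ N : ℕ, ∫⁻ x, min (u x) N := by
    intro u hu
    rw [← lintegral_iSup (fun N => hu.min measurable_const)
      (fun M N hMN x => min_le_min_left _ (by exact_mod_cast hMN))]
    refine lintegral_congr fun x => ?_
    rw [← inf_iSup_eq, ENNReal.iSup_natCast, inf_top_eq]
  rw [trunc f hf, trunc g hg]
  rw [ENNReal.iSup_mul]
  refine iSup_le fun M => ?_
  rw [ENNReal.mul_iSup]
  refine iSup_le fun N => ?_
  refine prekopaLeindler_real_of_iSup_ne_top (hf.min measurable_const) (hg.min measurable_const)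
    hh ?_ ?_ fun x y => le_trans ?_ (hfgh x y)
  · exact ((iSup_le fun x => min_le_right _ _).trans_lt (ENNReal.natCast_lt_top M)).ne
  · exact ((iSup_le fun x => min_le_right _ _).trans_lt (ENNReal.natCast_lt_top N)).ne
  · gcongr <;> exact min_le_left _ _

lemma MidpointPrekopaLeindler.prod {E F : Type*} [Add E] [SMul ℝ E] [MeasurableSpace E]
    [Add F] [SMul ℝ F] [MeasurableSpace F] {μ : Measure E} {ν : Measure F} [SFinite ν]
    (hμ : MidpointPrekopaLeindler μ) (hν : MidpointPrekopaLeindler ν) :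
    MidpointPrekopaLeindler (μ.prod ν) := by
  intro f g h hf hg hh hfgh
  rw [lintegral_prod _ hf.aemeasurable, lintegral_prod _ hg.aemeasurable,
    lintegral_prod _ hh.aemeasurable]
  refine hμ _ _ _ hf.lintegral_prod_right' hg.lintegral_prod_right' hh.lintegral_prod_right'
    fun x y => ?_
  exact hν _ _ _ (hf.comp measurable_prodMk_left) (hg.comp measurable_prodMk_left)
    (hh.comp measurable_prodMk_left) fun x' y' => hfgh (x, x') (y, y')

lemma MidpointPrekopaLeindler.of_measurePreserving {E F : Type*} [Add E] [SMul ℝ E]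
    [MeasurableSpace E] [Add F] [SMul ℝ F] [MeasurableSpace F] {μ : Measure E} {ν : Measure F}
    (hμ : MidpointPrekopaLeindler μ) {e : E → F} (he : MeasurePreserving e μ ν)
    (hmid : ∀ x y, e ((2⁻¹ : ℝ) • (x + y)) = (2⁻¹ : ℝ) • (e x + e y)) :
    MidpointPrekopaLeindler ν := by
  intro f g h hf hg hh hfgh
  rw [← he.lintegral_comp hf, ← he.lintegral_comp hg, ← he.lintegral_comp hh]
  exact hμ _ _ _ (hf.comp he.measurable) (hg.comp he.measurable) (hh.comp he.measurable)
    fun x y => by simpa only [Function.comp_apply, hmid] using hfgh (e x) (e y)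

lemma midpointPrekopaLeindler_pi (n : ℕ) :
    MidpointPrekopaLeindler (volume : Measure (Fin n → ℝ)) := by
  induction n with
  | zero =>
    intro f g h _ _ _ hfgh
    have := hfgh 0 0
    rw [Measure.volume_pi_eq_dirac 0]
    simpa [lintegral_dirac] using this
  | succ n ih =>
    refine (midpointPrekopaLeindler_real.prod ih).of_measurePreserving
      (volume_preserving_piFinSuccAbove (fun _ => ℝ) 0).symm fun x y => ?_
    funext i
    refine Fin.cases ?_ (fun j => ?_) i <;> simp [MeasurableEquiv.piFinSuccAbove, mul_add]

/-- The midpoint Prékopa–Leindler inequality on Euclidean space. -/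
lemma midpointPrekopaLeindler_euclideanSpace (n : ℕ) :
    MidpointPrekopaLeindler (volume : Measure (EuclideanSpace ℝ (Fin n))) :=
  (midpointPrekopaLeindler_pi n).of_measurePreserving (PiLp.volume_preserving_toLp (Fin n))
    fun x y => by simp

/-- The mass that `g` gives to the superlevel set `{t ≤ X}`. -/
def tailMass {E : Type*} [MeasurableSpace E] (μ : Measure E) (g X : E → ℝ≥0∞) (t : ℝ≥0∞) : ℝ≥0∞ :=
  ∫⁻ x, {x | t ≤ X x}.indicator g x ∂μ

lemma mul_tailMass_le {E : Type*} [MeasurableSpace E] (μ : Measure E) {g X : E → ℝ≥0∞}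
    (hg : Measurable g) (hX : Measurable X) (t : ℝ≥0∞) :
    t * tailMass μ g X t ≤ ∫⁻ x, X x * g x ∂μ := by
  rw [tailMass, ← lintegral_const_mul _ (hg.indicator (measurableSet_le measurable_const hX))]
  refine lintegral_mono fun x => ?_
  by_cases hx : t ≤ X x
  · rw [Set.indicator_of_mem (by exact hx)]
    gcongr
  · rw [Set.indicator_of_notMem (by exact hx)]
    simp

/-- Doubling the threshold at least squares the relative tail of a log-concave function. -/
lemma tailMass_two_mul_mul_le {E : Type*} [Add E] [SMul ℝ E] [MeasurableSpace E] {μ : Measure E}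
    (hμ : MidpointPrekopaLeindler μ) {g X : E → ℝ≥0∞} (hg : Measurable g) (hX : Measurable X)
    (hgmid : ∀ x y, g x * g y ≤ g ((2⁻¹ : ℝ) • (x + y)) ^ 2)
    (hXmid : ∀ x y, g x ≠ 0 → g y ≠ 0 → X x + X y ≤ 2 * X ((2⁻¹ : ℝ) • (x + y))) (t : ℝ≥0∞) :
    tailMass μ g X (2 * t) * ∫⁻ x, g x ∂μ ≤ tailMass μ g X t ^ 2 := by
  refine hμ _ _ _ (hg.indicator (measurableSet_le measurable_const hX)) hg
    (hg.indicator (measurableSet_le measurable_const hX)) fun x y => ?_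
  by_cases hx : 2 * t ≤ X x
  swap
  · rw [Set.indicator_of_notMem (by exact hx)]
    simp
  rcases eq_or_ne (g x) 0 with h0 | hgx
  · rw [Set.indicator_of_mem (by exact hx), h0]
    simp
  rcases eq_or_ne (g y) 0 with h0 | hgy
  · simp [h0]
  have hmem : t ≤ X ((2⁻¹ : ℝ) • (x + y)) := by
    have := (hx.trans le_self_add).trans (hXmid x y hgx hgy)
    exact (ENNReal.mul_le_mul_iff_right (by simp) (by simp)).1 this
  rw [Set.indicator_of_mem (by exact hx), Set.indicator_of_mem (by exact hmem)]
  exact hgmid x y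

lemma three_mul_le_two_add_two_pow (k : ℕ) : 3 * k ≤ 2 + 2 ^ k := by
  induction k with
  | zero => simp
  | succ k ih =>
    rcases Nat.lt_or_ge k 2 with hk | hk
    · interval_cases k <;> simp
    · have : 2 ^ 2 ≤ 2 ^ k := Nat.pow_le_pow_right (by norm_num) hk
      rw [pow_succ]
      omega

/-- Dyadic decomposition of `x ^ 2` above the threshold `T`. -/
lemma ENNReal.sq_le_mul_add_tsum {T x : ℝ≥0∞} (hT0 : T ≠ 0) (hT : T ≠ ∞) (hx : x ≠ ∞) :
    x ^ 2 ≤ T * x + ∑' k : ℕ, 4 ^ (k + 1) * T ^ 2 * (if 2 ^ k * T ≤ x then 1 else 0) := by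
  classical
  rcases lt_or_ge x T with hxT | hxT
  · exact le_add_right (by rw [sq]; gcongr)
  have hex : ∃ k : ℕ, x < 2 ^ k * T := by
    obtain ⟨k, hk⟩ := ENNReal.exists_nat_gt (ENNReal.div_ne_top hx hT0)
    refine ⟨k, (ENNReal.div_lt_iff (Or.inl hT0) (Or.inl hT)).1 (hk.trans_le ?_)⟩
    exact_mod_cast (Nat.lt_two_pow_self).le
  obtain ⟨k, hk⟩ : ∃ k, Nat.find hex = k + 1 := by
    refine Nat.exists_eq_succ_of_ne_zero fun h0 => ?_
    have := Nat.find_spec hex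
    rw [h0] at this
    simp only [pow_zero, one_mul] at this
    exact this.not_ge hxT
  have hlt : x < 2 ^ (k + 1) * T := hk ▸ Nat.find_spec hex
  have hle : 2 ^ k * T ≤ x := not_lt.1 (Nat.find_min hex (m := k) (by omega))
  refine le_add_left (le_trans ?_ (ENNReal.le_tsum k))
  rw [if_pos hle, mul_one]
  calc x ^ 2 ≤ (2 ^ (k + 1) * T) ^ 2 := by gcongr
    _ = 4 ^ (k + 1) * T ^ 2 := by rw [mul_pow, ← pow_mul, mul_comm (k + 1) 2, pow_mul]; norm_num

/-- Reverse Hölder inequality: the second moment of a nonnegative affine function against a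
log-concave function is controlled by its first moment. -/
lemma second_moment_mul_mass_le {E : Type*} [Add E] [SMul ℝ E] [MeasurableSpace E]
    {μ : Measure E} (hμ : MidpointPrekopaLeindler μ) {g X : E → ℝ≥0∞} (hg : Measurable g)
    (hX : Measurable X) (hX' : ∀ x, X x ≠ ∞)
    (hgmid : ∀ x y, g x * g y ≤ g ((2⁻¹ : ℝ) • (x + y)) ^ 2)
    (hXmid : ∀ x y, g x ≠ 0 → g y ≠ 0 → X x + X y ≤ 2 * X ((2⁻¹ : ℝ) • (x + y)))
    (hG0 : ∫⁻ x, g x ∂μ ≠ 0) (hG : ∫⁻ x, g x ∂μ ≠ ∞)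
    (hM0 : ∫⁻ x, X x * g x ∂μ ≠ 0) (hM : ∫⁻ x, X x * g x ∂μ ≠ ∞) :
    (∫⁻ x, X x ^ 2 * g x ∂μ) * ∫⁻ x, g x ∂μ ≤ 130 * (∫⁻ x, X x * g x ∂μ) ^ 2 := by
  have hdouble := tailMass_two_mul_mul_le hμ hg hX hgmid hXmid
  have hmarkov := mul_tailMass_le μ hg hX
  have hXg : Measurable fun x => X x * g x := hX.mul hg
  have hmeas : ∀ t, Measurable ({x | t ≤ X x}.indicator g) := fun t =>
    hg.indicator (measurableSet_le measurable_const hX)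
  set G := ∫⁻ x, g x ∂μ
  set M := ∫⁻ x, X x * g x ∂μ
  set F := tailMass μ g X
  set T := 2 * M / G with hTdef
  have hT0 : T ≠ 0 := by simp [hTdef, hM0, hG]
  have hT : T ≠ ∞ := ENNReal.div_ne_top (ENNReal.mul_ne_top (by simp) hM) hG0
  have hTG : T * G = 2 * M := ENNReal.div_mul_cancel hG0 hG
  have htail : ∀ k : ℕ, 2 ^ 2 ^ k * F (2 ^ k * T) ≤ G := by
    intro k
    induction k with
    | zero =>
      have h1 : M * (2 * F T) ≤ M * G :=
        calc M * (2 * F T) = T * F T * G := by rw [mul_right_comm, hTG]; ring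
          _ ≤ M * G := by gcongr; exact hmarkov T
      simpa using (ENNReal.mul_le_mul_iff_right hM0 hM).1 h1
    | succ k ih =>
      have h1 : G * (2 ^ 2 ^ (k + 1) * F (2 ^ (k + 1) * T)) ≤ G * G :=
        calc G * (2 ^ 2 ^ (k + 1) * F (2 ^ (k + 1) * T))
            = 2 ^ 2 ^ (k + 1) * (F (2 * (2 ^ k * T)) * G) := by
              rw [pow_succ' (2 : ℝ≥0∞) k, mul_assoc 2 (2 ^ k) T]; ring
          _ ≤ 2 ^ 2 ^ (k + 1) * F (2 ^ k * T) ^ 2 := by gcongr; exact hdouble _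
          _ = (2 ^ 2 ^ k * F (2 ^ k * T)) ^ 2 := by rw [mul_pow, ← pow_mul, ← pow_succ]
          _ ≤ G ^ 2 := by gcongr
          _ = G * G := sq G
      exact (ENNReal.mul_le_mul_iff_right hG0 hG).1 h1
  have hterm : ∀ k : ℕ, 4 ^ (k + 1) * T ^ 2 * F (2 ^ k * T) ≤ 16 * T ^ 2 * G * 2⁻¹ ^ k := by
    intro k
    have hnat : (4 : ℝ≥0∞) ^ (k + 1) * 2 ^ k ≤ 16 * 2 ^ 2 ^ k := by
      have h1 : 4 ^ (k + 1) * 2 ^ k ≤ 16 * 2 ^ 2 ^ k :=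
        calc 4 ^ (k + 1) * 2 ^ k = 2 ^ (3 * k + 2) := by
              rw [show 4 = 2 ^ 2 from rfl, ← pow_mul, ← pow_add]; congr 1; ring
          _ ≤ 2 ^ (4 + 2 ^ k) := Nat.pow_le_pow_right (by norm_num)
              (by have := three_mul_le_two_add_two_pow k; omega)
          _ = 16 * 2 ^ 2 ^ k := by rw [pow_add]; norm_num
      exact_mod_cast h1
    rw [← ENNReal.inv_pow, ← div_eq_mul_inv, ENNReal.le_div_iff_mul_le (by simp) (by simp)]
    calc 4 ^ (k + 1) * T ^ 2 * F (2 ^ k * T) * 2 ^ k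
        = (4 ^ (k + 1) * 2 ^ k) * T ^ 2 * F (2 ^ k * T) := by ring
      _ ≤ (16 * 2 ^ 2 ^ k) * T ^ 2 * F (2 ^ k * T) := by gcongr
      _ = 16 * T ^ 2 * (2 ^ 2 ^ k * F (2 ^ k * T)) := by ring
      _ ≤ 16 * T ^ 2 * G := by gcongr; exact htail k
  have hW : ∫⁻ x, X x ^ 2 * g x ∂μ ≤ T * M + 32 * T ^ 2 * G :=
    calc ∫⁻ x, X x ^ 2 * g x ∂μ
        ≤ ∫⁻ x, (T * (X x * g x) + ∑' k : ℕ, 4 ^ (k + 1) * T ^ 2 *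
            {x | 2 ^ k * T ≤ X x}.indicator g x) ∂μ := by
          refine lintegral_mono fun x => ?_
          refine (mul_le_mul_left (ENNReal.sq_le_mul_add_tsum hT0 hT (hX' x)) (g x)).trans_eq ?_
          rw [add_mul, ← ENNReal.tsum_mul_right, mul_assoc]
          congr 2
          funext k
          by_cases hk : 2 ^ k * T ≤ X x
          · rw [Set.indicator_of_mem (by exact hk), if_pos hk, mul_one]
          · rw [Set.indicator_of_notMem (by exact hk), if_neg hk, mul_zero, zero_mul]
      _ = T * M + ∑' k : ℕ, 4 ^ (k + 1) * T ^ 2 * F (2 ^ k * T) := by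
          rw [lintegral_add_left (hXg.const_mul T), lintegral_const_mul _ hXg,
            lintegral_tsum fun k => ((hmeas _).const_mul _).aemeasurable]
          simp only [lintegral_const_mul _ (hmeas _)]
          rfl
      _ ≤ T * M + ∑' k : ℕ, 16 * T ^ 2 * G * 2⁻¹ ^ k := by
          gcongr T * M + ?_
          exact ENNReal.tsum_le_tsum hterm
      _ = T * M + 32 * T ^ 2 * G := by
          rw [ENNReal.tsum_mul_left, ENNReal.tsum_geometric, ENNReal.one_sub_inv_two, inv_inv]
          ring
  calc (∫⁻ x, X x ^ 2 * g x ∂μ) * G ≤ (T * M + 32 * T ^ 2 * G) * G := by gcongr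
    _ = T * G * M + 32 * (T * G) ^ 2 := by ring
    _ = 130 * M ^ 2 := by rw [hTG]; ring

namespace IsLogConcave

variable {E : Type*} [NormedAddCommGroup E] [NormedSpace ℝ E] {g : E → ℝ}

lemma convex_support (hg : IsLogConcave g) : Convex ℝ (Function.support g) := by
  intro x hx y hy a b ha hb hab
  have hx' : 0 < g x := lt_of_le_of_ne (hg.1 x) (Ne.symm hx)
  have hy' : 0 < g y := lt_of_le_of_ne (hg.1 y) (Ne.symm hy)
  exact ((mul_pos (rpow_pos_of_pos hx' a) (rpow_pos_of_pos hy' b)).trans_le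
    (hg.2 x y a b ha hb hab)).ne'

lemma concaveOn_log (hg : IsLogConcave g) :
    ConcaveOn ℝ (Function.support g) fun x => Real.log (g x) := by
  refine ⟨hg.convex_support, fun x hx y hy a b ha hb hab => ?_⟩
  have hx' : 0 < g x := lt_of_le_of_ne (hg.1 x) (Ne.symm hx)
  have hy' : 0 < g y := lt_of_le_of_ne (hg.1 y) (Ne.symm hy)
  have hpos := mul_pos (rpow_pos_of_pos hx' a) (rpow_pos_of_pos hy' b)
  have := Real.log_le_log hpos (hg.2 x y a b ha hb hab)
  rwa [Real.log_mul (rpow_pos_of_pos hx' a).ne' (rpow_pos_of_pos hy' b).ne',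
    Real.log_rpow hx', Real.log_rpow hy'] at this

lemma continuousOn_interior_support [FiniteDimensional ℝ E] (hg : IsLogConcave g) :
    ContinuousOn g (interior (Function.support g)) :=
  hg.concaveOn_log.continuousOn_interior.rexp.congr fun x hx =>
    (Real.exp_log (lt_of_le_of_ne (hg.1 x) (Ne.symm (interior_subset hx)))).symm

lemma measurable_indicator_interior [FiniteDimensional ℝ E] [MeasurableSpace E] [BorelSpace E]
    (hg : IsLogConcave g) : Measurable ((interior (Function.support g)).indicator g) := by
  classical
  rw [← Set.piecewise_eq_indicator]
  exact hg.continuousOn_interior_support.measurable_piecewise continuousOn_const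
    isOpen_interior.measurableSet

lemma indicator_interior_mul_le (hg : IsLogConcave g) (x y : E) :
    (interior (Function.support g)).indicator g x * (interior (Function.support g)).indicator g y
      ≤ (interior (Function.support g)).indicator g ((2⁻¹ : ℝ) • (x + y)) ^ 2 := by
  by_cases hx : x ∈ interior (Function.support g)
  swap
  · rw [Set.indicator_of_notMem hx, zero_mul]
    positivity
  by_cases hy : y ∈ interior (Function.support g)
  swap
  · rw [Set.indicator_of_notMem hy, mul_zero]
    positivity
  have hmid : (2⁻¹ : ℝ) • (x + y) ∈ interior (Function.support g) := by
    rw [smul_add]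
    exact hg.convex_support.interior hx hy (by norm_num) (by norm_num) (by norm_num)
  rw [Set.indicator_of_mem hx, Set.indicator_of_mem hy, Set.indicator_of_mem hmid, smul_add]
  have h := hg.2 x y 2⁻¹ 2⁻¹ (by norm_num) (by norm_num) (by norm_num)
  have hx0 := hg.1 x
  have hy0 := hg.1 y
  calc g x * g y = (g x ^ (2⁻¹ : ℝ) * g y ^ (2⁻¹ : ℝ)) ^ 2 := by
        rw [mul_pow, ← rpow_natCast (g x ^ (2⁻¹ : ℝ)), ← rpow_natCast (g y ^ (2⁻¹ : ℝ)),
          ← rpow_mul hx0, ← rpow_mul hy0]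
        norm_num
    _ ≤ _ := by gcongr

end IsLogConcave

/-- If an approximately log-concave density vanishes at `x₀`, then a half-space through `x₀`
carries the density, and the distance to its boundary satisfies a reverse Hölder inequality. -/
lemma ApproxLogConcave.exists_second_moment_le {n : ℕ} {q : EuclideanSpace ℝ (Fin n) → ℝ}
    (hq0 : ∀ x, 0 ≤ q x) (hq1 : ∫ x, q x = 1) (hqlc : ApproxLogConcave (1 / Real.exp 1) q)
    {x₀ : EuclideanSpace ℝ (Fin n)} (hx₀ : q x₀ = 0) :
    ∃ θ : EuclideanSpace ℝ (Fin n), θ ≠ 0 ∧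
      (Integrable (fun x => q x * inner ℝ θ (x₀ - x)) →
        Integrable (fun x => q x * inner ℝ θ (x₀ - x) ^ 2) →
        ∫ x, q x * inner ℝ θ (x₀ - x) ^ 2 ≤
          130 * Real.exp 1 ^ 4 * (∫ x, q x * inner ℝ θ (x₀ - x)) ^ 2) := by
  obtain ⟨g, hg, hgq⟩ := hqlc
  simp only [one_div, inv_inv] at hgq
  have he : 0 < Real.exp 1 := Real.exp_pos 1
  have hgle : ∀ x, g x ≤ Real.exp 1 * q x := fun x => by
    have := (hgq x).1
    rwa [inv_mul_le_iff₀ he] at this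
  set S := interior (Function.support g)
  have hx₀S : x₀ ∉ S := fun h => interior_subset h
    (le_antisymm (by simpa [hx₀] using hgle x₀) (hg.1 x₀))
  obtain ⟨ℓ, hℓ⟩ := geometric_hahn_banach_open_point hg.convex_support.interior isOpen_interior hx₀S
  set θ := (InnerProductSpace.toDual ℝ _).symm ℓ with hθdef
  have hθ : ∀ x ∈ S, 0 < inner ℝ θ (x₀ - x) := fun x hx => by
    rw [hθdef, InnerProductSpace.toDual_symm_apply, map_sub]
    exact sub_pos.2 (hℓ x hx)
  clear_value θ
  set u : EuclideanSpace ℝ (Fin n) → ℝ≥0∞ := fun x => ENNReal.ofReal (S.indicator g x) with hu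
  set X : EuclideanSpace ℝ (Fin n) → ℝ≥0∞ := fun x => ENNReal.ofReal (inner ℝ θ (x₀ - x)) with hX
  set c : ℝ≥0∞ := ENNReal.ofReal (Real.exp 1) with hc
  have hct : c ≠ ∞ := ENNReal.ofReal_ne_top
  have hum : Measurable u := hg.measurable_indicator_interior.ennreal_ofReal
  have hXm : Measurable X := by fun_prop
  have hmemS : ∀ x, u x ≠ 0 → x ∈ S := fun x hx => by
    by_contra h
    simp [hu, Set.indicator_of_notMem h] at hx
  have humid : ∀ x y, u x * u y ≤ u ((2⁻¹ : ℝ) • (x + y)) ^ 2 := fun x y => by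
    have hnn : ∀ z, 0 ≤ S.indicator g z := Set.indicator_nonneg fun z _ => hg.1 z
    simp only [hu]
    rw [← ENNReal.ofReal_mul (hnn x), ← ENNReal.ofReal_pow (hnn _)]
    exact ENNReal.ofReal_le_ofReal (hg.indicator_interior_mul_le x y)
  have hXmid : ∀ x y, u x ≠ 0 → u y ≠ 0 → X x + X y ≤ 2 * X ((2⁻¹ : ℝ) • (x + y)) := by
    intro x y hx hy
    simp only [hX]
    rw [← ENNReal.ofReal_add (hθ x (hmemS x hx)).le (hθ y (hmemS y hy)).le, two_mul]
    refine le_trans (ENNReal.ofReal_le_ofReal (le_of_eq ?_)) ENNReal.ofReal_add_le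
    simp only [inner_sub_right, inner_smul_right, inner_add_right]
    ring
  have hSae : S =ᵐ[volume] Function.support g :=
    interior_ae_eq_of_null_frontier (hg.convex_support.addHaar_frontier volume)
  have hsupp : ∀ᵐ x, x ∈ S ∨ q x = 0 := by
    filter_upwards [hSae.mem_iff] with x hx
    by_cases hxS : x ∈ S
    · exact Or.inl hxS
    · have hgx : g x = 0 := by simpa using fun h => hxS (hx.2 h)
      exact Or.inr (le_antisymm (by simpa [hgx] using (hgq x).2) (hq0 x))
  have huq : ∀ x, u x ≤ c * ENNReal.ofReal (q x) := fun x => by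
    rw [hc, ← ENNReal.ofReal_mul he.le]
    exact ENNReal.ofReal_le_ofReal ((Set.indicator_le_self' (fun z _ => hg.1 z) x).trans (hgle x))
  have hqu : ∀ᵐ x, ENNReal.ofReal (q x) ≤ c * u x := by
    filter_upwards [hsupp] with x hx
    rcases hx with hx | hx
    · simp only [hu, hc, Set.indicator_of_mem hx]
      rw [← ENNReal.ofReal_mul he.le]
      exact ENNReal.ofReal_le_ofReal (hgq x).2
    · simp [hx]
  have hqint : Integrable q := .of_integral_ne_zero (by rw [hq1]; exact one_ne_zero)
  have hqlint : ∫⁻ x, ENNReal.ofReal (q x) = 1 := by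
    rw [← ofReal_integral_eq_lintegral_ofReal hqint (.of_forall hq0), hq1, ENNReal.ofReal_one]
  have hG1 : 1 ≤ c * ∫⁻ x, u x := by
    rw [← hqlint, ← lintegral_const_mul _ hum]
    exact lintegral_mono_ae hqu
  have hG0 : ∫⁻ x, u x ≠ 0 := fun h => by simp [h] at hG1
  have hGt : ∫⁻ x, u x ≠ ∞ := by
    have : ∫⁻ x, u x ≤ c * ∫⁻ x, ENNReal.ofReal (q x) := by
      rw [← lintegral_const_mul' _ _ hct]
      exact lintegral_mono huq
    rw [hqlint, mul_one] at this
    exact (this.trans_lt hct.lt_top).ne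
  obtain ⟨z, hz⟩ : ∃ z, z ∈ S := by
    by_contra! h
    exact hG0 (by simp [hu, Set.indicator_of_notMem (h _)])
  refine ⟨θ, fun h0 => by simpa [h0] using hθ z hz, fun hint1 hint2 => ?_⟩
  have hqθ : ∀ᵐ x, 0 ≤ q x * inner ℝ θ (x₀ - x) := by
    filter_upwards [hsupp] with x hx
    rcases hx with hx | hx
    · exact mul_nonneg (hq0 x) (hθ x hx).le
    · simp [hx]
  set m := ∫ x, q x * inner ℝ θ (x₀ - x) with hm
  have hm0 : 0 ≤ m := integral_nonneg_of_ae hqθ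
  have hMle : ∫⁻ x, X x * u x ≤ c * ENNReal.ofReal m := by
    rw [hm, ofReal_integral_eq_lintegral_ofReal hint1 hqθ, ← lintegral_const_mul' _ _ hct]
    refine lintegral_mono fun x => ?_
    rw [ENNReal.ofReal_mul (hq0 x), ← mul_assoc, mul_comm]
    gcongr
    exact huq x
  have hMt : ∫⁻ x, X x * u x ≠ ∞ :=
    (hMle.trans_lt (ENNReal.mul_lt_top hct.lt_top ENNReal.ofReal_lt_top)).ne
  have hM0 : ∫⁻ x, X x * u x ≠ 0 := fun h => by
    rw [lintegral_eq_zero_iff (by fun_prop)] at h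
    refine hG0 ((lintegral_eq_zero_iff hum).2 ?_)
    filter_upwards [h] with x hx
    by_contra hne
    have hXx : X x ≠ 0 := (ENNReal.ofReal_pos.2 (hθ x (hmemS x hne))).ne'
    exact mul_ne_zero hXx hne hx
  have hWle : ENNReal.ofReal (∫ x, q x * inner ℝ θ (x₀ - x) ^ 2) ≤ c * ∫⁻ x, X x ^ 2 * u x := by
    rw [ofReal_integral_eq_lintegral_ofReal hint2
      (.of_forall fun x => mul_nonneg (hq0 x) (sq_nonneg _)),
      ← lintegral_const_mul _ (by fun_prop)]
    refine lintegral_mono_ae ?_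
    filter_upwards [hsupp, hqu] with x hx hx'
    rcases hx with hx | hx
    · rw [ENNReal.ofReal_mul (hq0 x), ENNReal.ofReal_pow (hθ x hx).le, mul_left_comm, mul_comm]
      gcongr
    · simp [hx]
  have hmain := second_moment_mul_mass_le (midpointPrekopaLeindler_euclideanSpace n) hum hXm
    (fun _ => ENNReal.ofReal_ne_top) humid hXmid hG0 hGt hM0 hMt
  rw [← ENNReal.ofReal_le_ofReal_iff (by positivity)]
  calc ENNReal.ofReal (∫ x, q x * inner ℝ θ (x₀ - x) ^ 2)
      ≤ c * (∫⁻ x, X x ^ 2 * u x) * 1 := by rwa [mul_one]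
    _ ≤ c * (∫⁻ x, X x ^ 2 * u x) * (c * ∫⁻ x, u x) := by gcongr
    _ = c ^ 2 * ((∫⁻ x, X x ^ 2 * u x) * ∫⁻ x, u x) := by ring
    _ ≤ c ^ 2 * (130 * (∫⁻ x, X x * u x) ^ 2) := by gcongr
    _ ≤ c ^ 2 * (130 * (c * ENNReal.ofReal m) ^ 2) := by gcongr
    _ = 130 * c ^ 4 * ENNReal.ofReal m ^ 2 := by ring
    _ = ENNReal.ofReal (130 * Real.exp 1 ^ 4 * m ^ 2) := by
      rw [ENNReal.ofReal_mul (by positivity), ENNReal.ofReal_mul (by norm_num),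
        ENNReal.ofReal_pow he.le, ENNReal.ofReal_pow hm0, ENNReal.ofReal_ofNat]

section Moments

variable {n : ℕ} {q : EuclideanSpace ℝ (Fin n) → ℝ}

lemma integrable_mul_coord_sub_mul_coord_sub (hq0 : ∀ x, 0 ≤ q x) (hq : Integrable q)
    (hcov : (densCov n q).PosDef) (i j : Fin n) :
    Integrable fun x => q x * ((x i - densMean n q i) * (x j - densMean n q j)) := by
  have hdiag : ∀ k, Integrable fun x =>
      q x * ((x k - densMean n q k) * (x k - densMean n q k)) := fun k =>
    .of_integral_ne_zero (hcov.diag_pos (i := k)).ne'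
  refine ((hdiag i).add (hdiag j)).mono' ?_ (.of_forall fun x => ?_)
  · exact hq.aestronglyMeasurable.mul (Continuous.aestronglyMeasurable (by fun_prop))
  · rw [norm_mul, Real.norm_of_nonneg (hq0 x), Pi.add_apply, ← mul_add, Real.norm_eq_abs]
    gcongr
    · exact hq0 x
    · rw [abs_le]
      constructor <;> nlinarith [sq_nonneg (x i - densMean n q i + (x j - densMean n q j)),
        sq_nonneg (x i - densMean n q i - (x j - densMean n q j)),
        sq_nonneg (x i - densMean n q i), sq_nonneg (x j - densMean n q j)]

lemma integrable_mul_coord_sub (hq0 : ∀ x, 0 ≤ q x) (hq : Integrable q)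
    (hcov : (densCov n q).PosDef) (i : Fin n) :
    Integrable fun x => q x * (x i - densMean n q i) := by
  refine (hq.add (integrable_mul_coord_sub_mul_coord_sub hq0 hq hcov i i)).mono' ?_
    (.of_forall fun x => ?_)
  · exact hq.aestronglyMeasurable.mul (Continuous.aestronglyMeasurable (by fun_prop))
  · rw [norm_mul, Real.norm_of_nonneg (hq0 x), Pi.add_apply, ← mul_one_add, Real.norm_eq_abs]
    gcongr
    · exact hq0 x
    · rw [abs_le]
      constructor <;> nlinarith [sq_nonneg (x i - densMean n q i - 1),
        sq_nonneg (x i - densMean n q i + 1)]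

lemma integral_mul_coord_sub (hq0 : ∀ x, 0 ≤ q x) (hq1 : ∫ x, q x = 1) (hq : Integrable q)
    (hcov : (densCov n q).PosDef) (i : Fin n) :
    ∫ x, q x * (x i - densMean n q i) = 0 := by
  have hcoord : ∀ k, Integrable fun x => q x * x k := fun k => by
    refine ((integrable_mul_coord_sub hq0 hq hcov k).add
      (hq.mul_const (densMean n q k))).congr (.of_forall fun x => ?_)
    simp only [Pi.add_apply]
    ring
  have hmean : densMean n q i = ∫ x, q x * x i := by
    rw [densMean, eval_integral_piLp fun k => by simpa using hcoord k]
    simp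
  simp only [mul_sub]
  rw [integral_sub (hcoord i) (hq.mul_const _), integral_mul_const, hq1, ← hmean]
  ring

/-- First and second moments of the affine function `x ↦ ⟪θ, x₀ - x⟫`. -/
lemma moments_inner_sub (hq0 : ∀ x, 0 ≤ q x) (hq1 : ∫ x, q x = 1)
    (hcov : (densCov n q).PosDef) (θ x₀ : EuclideanSpace ℝ (Fin n)) :
    (Integrable (fun x => q x * inner ℝ θ (x₀ - x)) ∧
      ∫ x, q x * inner ℝ θ (x₀ - x) = inner ℝ θ (x₀ - densMean n q)) ∧
    (Integrable (fun x => q x * inner ℝ θ (x₀ - x) ^ 2) ∧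
      ∫ x, q x * inner ℝ θ (x₀ - x) ^ 2 =
        inner ℝ θ (x₀ - densMean n q) ^ 2 + ∑ i, ∑ j, θ i * densCov n q i j * θ j) := by
  have hq : Integrable q := .of_integral_ne_zero (by rw [hq1]; exact one_ne_zero)
  have hI1 := integrable_mul_coord_sub hq0 hq hcov
  have hI2 := integrable_mul_coord_sub_mul_coord_sub hq0 hq hcov
  have hZ := integral_mul_coord_sub hq0 hq1 hq hcov
  set m := inner ℝ θ (x₀ - densMean n q) with hm
  have hinner : ∀ x, inner ℝ θ (x₀ - x) = m - ∑ i, θ i * (x i - densMean n q i) := fun x => by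
    have h1 : ∑ i, θ i * (x i - densMean n q i) = inner ℝ θ (x - densMean n q) := by
      simp [PiLp.inner_apply, mul_comm]
    rw [h1, hm, ← inner_sub_right]
    congr 1
    abel
  have hlin : ∀ x, q x * ∑ i, θ i * (x i - densMean n q i) =
      ∑ i, θ i * (q x * (x i - densMean n q i)) := fun x => by
    rw [Finset.mul_sum]
    exact Finset.sum_congr rfl fun i _ => by ring
  have hquad : ∀ x, q x * (∑ i, θ i * (x i - densMean n q i)) ^ 2 =
      ∑ i, ∑ j, θ i * θ j * (q x * ((x i - densMean n q i) * (x j - densMean n q j))) := by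
    intro x
    rw [sq, Finset.sum_mul_sum, Finset.mul_sum]
    refine Finset.sum_congr rfl fun i _ => ?_
    rw [Finset.mul_sum]
    exact Finset.sum_congr rfl fun j _ => by ring
  have hJ1 : Integrable fun x => q x * ∑ i, θ i * (x i - densMean n q i) := by
    simp only [hlin]
    exact integrable_finsetSum _ fun i _ => (hI1 i).const_mul _
  have hJ2 : Integrable fun x => q x * (∑ i, θ i * (x i - densMean n q i)) ^ 2 := by
    simp only [hquad]
    exact integrable_finsetSum _ fun i _ => integrable_finsetSum _ fun j _ =>
      (hI2 i j).const_mul _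
  have hV1 : ∫ x, q x * ∑ i, θ i * (x i - densMean n q i) = 0 := by
    simp only [hlin]
    rw [integral_finsetSum _ fun i _ => (hI1 i).const_mul _]
    simp [integral_const_mul, hZ]
  have hV2 : ∫ x, q x * (∑ i, θ i * (x i - densMean n q i)) ^ 2 =
      ∑ i, ∑ j, θ i * densCov n q i j * θ j := by
    simp only [hquad]
    rw [integral_finsetSum _ fun i _ => integrable_finsetSum _ fun j _ => (hI2 i j).const_mul _]
    refine Finset.sum_congr rfl fun i _ => ?_
    rw [integral_finsetSum _ fun j _ => (hI2 i j).const_mul _]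
    refine Finset.sum_congr rfl fun j _ => ?_
    rw [integral_const_mul, densCov, Matrix.of_apply]
    ring
  have he1 : ∀ x, q x * inner ℝ θ (x₀ - x) =
      m * q x - q x * ∑ i, θ i * (x i - densMean n q i) := fun x => by rw [hinner]; ring
  have he2 : ∀ x, q x * inner ℝ θ (x₀ - x) ^ 2 =
      m ^ 2 * q x - 2 * m * (q x * ∑ i, θ i * (x i - densMean n q i)) +
        q x * (∑ i, θ i * (x i - densMean n q i)) ^ 2 := fun x => by rw [hinner]; ring
  simp only [he1, he2]
  have hK1 : Integrable fun x => m ^ 2 * q x := hq.const_mul _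
  have hK2 : Integrable fun x => 2 * m * (q x * ∑ i, θ i * (x i - densMean n q i)) :=
    hJ1.const_mul _
  have hK : Integrable fun x => m ^ 2 * q x -
      2 * m * (q x * ∑ i, θ i * (x i - densMean n q i)) := hK1.sub hK2
  refine ⟨⟨(hq.const_mul _).sub hJ1, ?_⟩, hK.add hJ2, ?_⟩
  · rw [integral_sub (hq.const_mul _) hJ1, integral_const_mul, hq1, hV1]
    ring
  · rw [integral_add hK hJ2, integral_sub hK1 hK2, integral_const_mul,
      integral_const_mul, hq1, hV1, hV2]
    ring

end Moments

/-- Cauchy–Schwarz inequality between a quadratic form and its inverse, in ratio form. -/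
lemma Matrix.PosDef.mul_inner_sq_le {n : ℕ} {A : Matrix (Fin n) (Fin n) ℝ} (hA : A.PosDef)
    (θ v : EuclideanSpace ℝ (Fin n)) {r : ℝ} (hr : 0 ≤ r)
    (hv : r * ∑ i, ∑ j, v i * A⁻¹ i j * v j ≤ 1) :
    r * inner ℝ θ v ^ 2 ≤ ∑ i, ∑ j, θ i * A i j * θ j := by
  have hform : ∀ (B : Matrix (Fin n) (Fin n) ℝ) (w : EuclideanSpace ℝ (Fin n)),
      ∑ i, ∑ j, w i * B i j * w j = w.ofLp ⬝ᵥ B.mulVec w.ofLp := fun B w => by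
    simp only [dotProduct, Matrix.mulVec, Finset.mul_sum, mul_assoc]
  rw [hform] at hv ⊢
  have hAs : A.transpose = A := by simpa using hA.isHermitian.eq
  have hinner : inner ℝ θ v = θ.ofLp ⬝ᵥ v.ofLp := by
    simp [PiLp.inner_apply, dotProduct, mul_comm]
  have hAw : A.mulVec (A⁻¹.mulVec v.ofLp) = v.ofLp := by
    rw [Matrix.mulVec_mulVec,
      Matrix.mul_nonsing_inv _ ((Matrix.isUnit_iff_isUnit_det _).1 hA.isUnit), Matrix.one_mulVec]
  rw [hinner]
  set s := θ.ofLp ⬝ᵥ v.ofLp with hs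
  set w := A⁻¹.mulVec v.ofLp with hw
  have hpos := hA.posSemidef.dotProduct_mulVec_nonneg (θ.ofLp - (r * s) • w)
  have hwA : w ⬝ᵥ A.mulVec θ.ofLp = s := by
    rw [Matrix.dotProduct_mulVec, ← Matrix.mulVec_transpose, hAs, hAw, dotProduct_comm]
  have hexp : star (θ.ofLp - (r * s) • w) ⬝ᵥ A.mulVec (θ.ofLp - (r * s) • w) =
      θ.ofLp ⬝ᵥ A.mulVec θ.ofLp - 2 * r * s ^ 2 + (r * s) ^ 2 * (v.ofLp ⬝ᵥ w) := by
    simp only [star_trivial, Matrix.mulVec_sub, Matrix.mulVec_smul, hAw, sub_dotProduct,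
      dotProduct_sub, smul_dotProduct, dotProduct_smul, smul_eq_mul, hwA, ← hs,
      dotProduct_comm w v.ofLp]
    ring
  rw [hexp] at hpos
  nlinarith [mul_le_mul_of_nonneg_left hv (mul_nonneg hr (sq_nonneg s))]

/-- **Lemma 7.1.** The ellipsoid `𝓔_q(1/100)` is contained in the support of any
`(1/e)`-approximately log-concave probability density `q`. -/
theorem ellipsoid_in_support
    (n : ℕ) (q : EuclideanSpace ℝ (Fin n) → ℝ)
    (hq0 : ∀ x, 0 ≤ q x) (hq1 : ∫ x, q x = 1)
    (hqlc : ApproxLogConcave (1 / Real.exp 1) q)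
    (hcov : (densCov n q).PosDef) :
    {x | mahal n (densCov n q)⁻¹ (x - densMean n q) ≤ 1 / 100} ⊆ Function.support q := by
  intro x₀ hx₀ hqx₀
  obtain ⟨θ, hθ, hmom⟩ := hqlc.exists_second_moment_le hq0 hq1 hqx₀
  obtain ⟨⟨hint1, hval1⟩, hint2, hval2⟩ := moments_inner_sub hq0 hq1 hcov θ x₀
  have hbound := hmom hint1 hint2
  rw [hval1, hval2] at hbound
  have hell : 10000 * ∑ i, ∑ j, (x₀ - densMean n q) i * (densCov n q)⁻¹ i j *
      (x₀ - densMean n q) j ≤ 1 := by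
    have := (Real.sqrt_le_left (by norm_num)).1 hx₀
    linarith
  have hcs := hcov.mul_inner_sq_le θ (x₀ - densMean n q) (by norm_num) hell
  have hvar : 0 < ∑ i, ∑ j, θ i * densCov n q i j * θ j := by
    have := hcov.dotProduct_mulVec_pos (x := θ.ofLp) (by simpa using hθ)
    simpa [dotProduct, Matrix.mulVec, Finset.mul_sum, mul_assoc] using this
  have hexp : Real.exp 1 ^ 4 ≤ 55 :=
    calc Real.exp 1 ^ 4 ≤ 2.7182818286 ^ 4 := by gcongr; exact Real.exp_one_lt_d9.le
      _ ≤ 55 := by norm_num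
  nlinarith [mul_le_mul_of_nonneg_right hexp (sq_nonneg (inner ℝ θ (x₀ - densMean n q)))]
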